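/- For a uniformly random word x ∈ Z_m^n with m > 2, n > 3, and any constant c > 0, Pr( |L_1(x)| - E[|L_1(x)|] ≥ c·(m + 1/m)·n·√(n-1) ) ≤ exp(-c^2/2), and the same bound holds for the lower tail Pr( |L_1(x)| - E[|L_1(x)|] ≤ -c·(m + 1/m)·n·√(n-1) ). -/

import Mathlib

open Finset

/-- The (0-indexed, inclusive) segment `x_i,…,x_j` is alternating, i.e. of the
form `abab…` : adjacent symbols differ and the segment has period 2. -/
def IsAltOn {m : ℕ} (x : ℕ → Fin m) (i j : ℕ) : Prop :=
  (∀ k ∈ Finset.Ico i j, x k ≠ x (k + 1)) ∧ ∀ k ∈ Finset.Ico i (j - 1), x k = x (k + 2)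

instance {m : ℕ} (x : ℕ → Fin m) (i j : ℕ) : Decidable (IsAltOn x i j) :=
  inferInstanceAs (Decidable (_ ∧ _))

/-- The set of (0-indexed, inclusive) index pairs of maximal alternating segments
of the word `x_0,…,x_{n-1}`. -/
def altSegs {m : ℕ} (n : ℕ) (x : ℕ → Fin m) : Finset (ℕ × ℕ) :=
  (Finset.range n ×ˢ Finset.range n).filter (fun p => p.1 ≤ p.2 ∧ IsAltOn x p.1 p.2 ∧
    (p.1 = 0 ∨ ¬ IsAltOn x (p.1 - 1) p.2) ∧ (p.2 = n - 1 ∨ ¬ IsAltOn x p.1 (p.2 + 1)))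

/-- `a(x)` : the number of maximal alternating segments of `x_0,…,x_{n-1}`. -/
def aCount {m : ℕ} (n : ℕ) (x : ℕ → Fin m) : ℕ := (altSegs n x).card

/-- `∑ s_i` : the sum of the lengths of the maximal alternating segments. -/
def sumLen {m : ℕ} (n : ℕ) (x : ℕ → Fin m) : ℕ := ∑ p ∈ altSegs n x, (p.2 - p.1 + 1)

/-- `∑ s_i²` : the sum of the squares of the lengths of the maximal alternating segments. -/
def sumLenSq {m : ℕ} (n : ℕ) (x : ℕ → Fin m) : ℕ := ∑ p ∈ altSegs n x, (p.2 - p.1 + 1) ^ 2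

/-- `ρ(x)` : the number of runs of the word `x_0,…,x_{n-1}`. -/
def rho {m : ℕ} (n : ℕ) (x : ℕ → Fin m) : ℕ :=
  1 + ((Finset.range (n - 1)).filter (fun i => x i ≠ x (i + 1))).card

/-- `h(x)` : the length of the first maximal alternating segment of `x_0,…,x_{n-1}`. -/
def headAlt {m : ℕ} (n : ℕ) (x : ℕ → Fin m) : ℕ :=
  ((Finset.range n).filter (fun j => IsAltOn x 0 j)).card

/-- `t(x)` : the length of the last maximal alternating segment of `x_0,…,x_{n-1}`. -/
def tailAlt {m : ℕ} (n : ℕ) (x : ℕ → Fin m) : ℕ :=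
  ((Finset.range n).filter (fun j => IsAltOn x (n - 1 - j) (n - 1))).card

/-- Extend a word of length `n` to a function `ℕ → Fin m` (junk value `0` beyond `n`). -/
def extWord {m : ℕ} (n : ℕ) (hm : 0 < m) (y : Fin n → Fin m) : ℕ → Fin m :=
  fun i => if h : i < n then y ⟨i, h⟩ else ⟨0, hm⟩

/-- The FLL ball of radius 1 around `x` : all words `y` of length `n` sharing with `x`
a common subsequence of length `n - 1` (equivalently, `d_l(x,y) ≤ 1`). -/
def L1ball {m : ℕ} (n : ℕ) (x : Fin n → Fin m) : Set (Fin n → Fin m) :=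
  {y | ∃ z : List (Fin m), z.length = n - 1 ∧ z.Sublist (List.ofFn x) ∧ z.Sublist (List.ofFn y)}

/-- `|L_1(x)|` : the size of the FLL ball of radius 1 around `x`. -/
noncomputable def L1size {m : ℕ} (n : ℕ) (x : Fin n → Fin m) : ℕ := (L1ball n x).ncard

/-- `f_n(y)` for binary words `y` of length `len` : `ρ(y)·n - (1/2)∑ s_j²`. -/
noncomputable def fB (n len : ℕ) (y : ℕ → Fin 2) : ℝ :=
  (rho len y : ℝ) * n - (sumLenSq len y : ℝ) / 2

/-- `f_{m,n}(y)` for words `y` of length `len` over `Z_m` :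
`ρ(y)(mn-n-1) - (1/2)∑ s_j² + (3/2)∑ s_j - a(y)`. -/
noncomputable def fM (m n len : ℕ) (y : ℕ → Fin m) : ℝ :=
  (rho len y : ℝ) * ((m : ℝ) * n - n - 1) - (sumLenSq len y : ℝ) / 2
    + 3 / 2 * (sumLen len y : ℝ) - (aCount len y : ℝ)

/-!
A word `y = b :: v` with `b ≠ a` is in the ball around `x = a :: w` if and only if `w` is a
subsequence of `y` or `v` is a subsequence of `x`. Words of the first kind number
`n (m - 1) + 1` in total, those of the second kind are counted by runs, and the overlap by
alternating prefixes; conditioning on the first letter of `y` thus gives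

  `|L_1(x)| = ρ(x) (n (m - 1) - 1) + 2 - #{alternating factors of x of length at least three}`.

Reveal the letters of a uniformly random `x` from last to first. How much the next letter changes
the two statistics in this formula depends only on whether it repeats the current first letter,
extends the alternating prefix, or does neither, so the conditional expectations of `|L_1(x)|` have
a closed form. Its increments vanish in the first step and are at most `(m + 1/m) n` afterwards, so
the Azuma–Hoeffding inequality applies with `n - 1` steps.
-/

namespace FLL

section Words

variable {α : Type*}

/-- The number of words of length `k` over `α` that satisfy `P`. Words are handled as lists, so
that they can be taken apart letter by letter. -/
noncomputable def countWords (k : ℕ) (P : List α → Prop) : ℕ :=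
  {x : Fin k → α | P (List.ofFn x)}.ncard

lemma countWords_congr {k : ℕ} {P Q : List α → Prop} (h : ∀ l, l.length = k → (P l ↔ Q l)) :
    countWords k P = countWords k Q := by
  simp only [countWords, h _ (List.length_ofFn)]

lemma countWords_zero_of_nil {P : List α → Prop} (h : P []) : countWords 0 P = 1 := by
  simp [countWords, h]

lemma countWords_eq_zero {k : ℕ} {P : List α → Prop} (h : ∀ l, ¬ P l) : countWords k P = 0 := by
  simp [countWords, h]

lemma countWords_eq_self (w : List α) : countWords w.length (· = w) = 1 := by
  have : {x : Fin w.length → α | List.ofFn x = w} = {w.get} := by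
    ext x
    rw [Set.mem_ofPred_eq, Set.mem_singleton_iff, ← List.ofFn_injective.eq_iff, List.ofFn_get]
  rw [countWords, this, Set.ncard_singleton]

lemma countWords_cons_eq_cons [DecidableEq α] (b c : α) (w : List α) :
    countWords w.length (fun l => b :: l = c :: w) = if b = c then 1 else 0 := by
  split_ifs with hbc
  · simpa only [hbc, List.cons.injEq, true_and] using countWords_eq_self w
  · exact countWords_eq_zero fun l h => hbc (List.cons.inj h).1

lemma countWords_or_add_countWords_and [Finite α] (k : ℕ) (P Q : List α → Prop) :
    countWords k (fun l => P l ∨ Q l) + countWords k (fun l => P l ∧ Q l)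
      = countWords k P + countWords k Q :=
  Set.ncard_union_add_ncard_inter _ _

variable [Fintype α]

lemma sum_ofFn_succ {M : Type*} [AddCommMonoid M] (k : ℕ) (f : List α → M) :
    ∑ x : Fin (k + 1) → α, f (List.ofFn x) = ∑ a, ∑ x : Fin k → α, f (a :: List.ofFn x) := by
  rw [← (Fin.consEquiv fun _ : Fin (k + 1) => α).sum_comp, Fintype.sum_prod_type]
  simp [Fin.consEquiv, List.ofFn_succ]

lemma countWords_succ (k : ℕ) (P : List α → Prop) :
    countWords (k + 1) P = ∑ a, countWords k fun l => P (a :: l) := by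
  classical
  simp only [countWords, Set.ncard_eq_toFinset_card', Set.toFinset_ofPred, Finset.card_filter]
  exact sum_ofFn_succ k fun l => if P l then 1 else 0

lemma sum_eq_of_forall_ne [DecidableEq α] {R : Type*} [CommRing R] (a c : α) (f : α → R) (v d : R)
    (h : ∀ b ≠ a, f b = v + if b = c then d else 0) :
    ∑ b, f b = f a + (Fintype.card α - 1) * v + if a = c then 0 else d := by
  have hcard : ((univ.erase a).card : R) = Fintype.card α - 1 := by
    rw [Finset.cast_card_erase_of_mem (mem_univ a), Finset.card_univ]
  rw [← Finset.add_sum_erase univ f (mem_univ a),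
    Finset.sum_congr rfl fun b hb => h b (Finset.ne_of_mem_erase hb), Finset.sum_add_distrib,
    Finset.sum_const, nsmul_eq_mul, hcard, Finset.sum_ite_eq']
  simp only [Finset.mem_erase, mem_univ, and_true, ne_eq, eq_comm, ite_not, add_assoc]

end Words

section WordStatistics

variable {α : Type*} [DecidableEq α]

/-- The number of runs (maximal constant factors) of a word: its length once repeated letters are
collapsed. -/
def numRuns (w : List α) : ℕ := (w.destutter (· ≠ ·)).length

/-- The length of the longest prefix of a word that agrees with `acac…`. -/
def altMatch (a c : α) : List α → ℕ
  | [] => 0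
  | d :: w => if d = a then altMatch c a w + 1 else 0

/-- The number of letters beyond the first in the longest alternating prefix of a word. -/
def altTail : List α → ℕ
  | a :: c :: w => if a = c then 0 else altMatch a c w + 1
  | _ => 0

/-- The number of alternating factors of length at least three of a word, counted by their first
letter. In terms of the lengths `s_j` of the maximal alternating segments it is
`∑ (s_j - 1) (s_j - 2) / 2`. -/
def altFactors : List α → ℕ
  | [] => 0
  | a :: w => altFactors w + (altTail (a :: w) - 1)

lemma numRuns_singleton (a : α) : numRuns [a] = 1 := rfl

lemma numRuns_cons_cons (a c : α) (w : List α) :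
    numRuns (a :: c :: w) = numRuns (c :: w) + if a = c then 0 else 1 := by
  by_cases h : a = c <;> simp [numRuns, List.destutter, h]

lemma altTail_cons_cons (a c : α) (w : List α) :
    altTail (a :: c :: w) = if a = c then 0 else altMatch a c w + 1 := rfl

lemma altFactors_singleton (a : α) : altFactors [a] = 0 := rfl

lemma altFactors_cons_cons (a c : α) (w : List α) :
    altFactors (a :: c :: w) = altFactors (c :: w) + if a = c then 0 else altMatch a c w := by
  by_cases h : a = c <;> simp [altFactors, altTail_cons_cons, h]

lemma altMatch_le_length (a c : α) (w : List α) : altMatch a c w ≤ w.length := by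
  induction w generalizing a c with
  | nil => rfl
  | cons d w ih =>
    rw [altMatch, List.length_cons]
    split_ifs
    exacts [Nat.succ_le_succ (ih c a), Nat.zero_le _]

lemma altTail_cons_le_length (c : α) (w : List α) : altTail (c :: w) ≤ w.length := by
  cases w with
  | nil => rfl
  | cons d w =>
    rw [altTail_cons_cons, List.length_cons]
    split_ifs
    exacts [Nat.zero_le _, Nat.succ_le_succ (altMatch_le_length c d w)]

-- Only the letter that continues the alternation of `c :: w` contributes.
lemma sum_altMatch_erase [Fintype α] (c : α) (w : List α) :
    ∑ a ∈ univ.erase c, altMatch a c w = altTail (c :: w) := by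
  cases w with
  | nil => simp [altMatch, altTail]
  | cons d w => simp [altMatch, altTail_cons_cons, eq_comm]

lemma altMatch_le_altTail {a c : α} (hac : a ≠ c) (w : List α) :
    altMatch a c w ≤ altTail (c :: w) := by
  cases w with
  | nil => rfl
  | cons d w =>
    rw [altMatch, altTail_cons_cons]
    split_ifs with hda hcd
    · exact absurd (hda.symm.trans hcd.symm) hac
    · exact hda ▸ le_rfl
    all_goals exact Nat.zero_le _

end WordStatistics

section BallSize

variable {α : Type*}

/-- The words `x` and `y` have a common subsequence of length `k`. -/
def HasCommonSubseq (k : ℕ) (x y : List α) : Prop :=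
  ∃ z : List α, z.length = k ∧ z.Sublist x ∧ z.Sublist y

lemma sublist_iff_eq_of_length_eq {w l : List α} (h : w.length = l.length) :
    w.Sublist l ↔ w = l :=
  ⟨fun hs => hs.eq_of_length h, fun h => h ▸ List.Sublist.refl _⟩

lemma cons_sublist_cons_of_ne {a b : α} (h : a ≠ b) {w l : List α} :
    (a :: w).Sublist (b :: l) ↔ (a :: w).Sublist l := by
  rw [List.cons_sublist_cons', or_iff_left fun hw => h hw.1]

lemma hasCommonSubseq_cons_cons (k : ℕ) (a : α) (w v : List α) :
    HasCommonSubseq (k + 1) (a :: w) (a :: v) ↔ HasCommonSubseq k w v := by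
  constructor
  · rintro ⟨z, hz, hzw, hzv⟩
    exact ⟨z.tail, by simp [hz], hzw.tail, hzv.tail⟩
  · rintro ⟨z, hz, hzw, hzv⟩
    exact ⟨a :: z, by simp [hz], hzw.cons_cons a, hzv.cons_cons a⟩

lemma hasCommonSubseq_cons_cons_of_ne {k : ℕ} {a b : α} (hab : a ≠ b) {w v : List α}
    (hw : w.length = k) (hv : v.length = k) :
    HasCommonSubseq k (a :: w) (b :: v) ↔ w.Sublist (b :: v) ∨ v.Sublist (a :: w) := by
  constructor
  · rintro ⟨z, hz, hzw, hzv⟩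
    rcases List.sublist_cons_iff.1 hzw with hzw' | ⟨r, rfl, -⟩
    · exact .inl ((sublist_iff_eq_of_length_eq (hz.trans hw.symm)).1 hzw' ▸ hzv)
    · have hzv' := (cons_sublist_cons_of_ne hab).1 hzv
      exact .inr ((sublist_iff_eq_of_length_eq (hz.trans hv.symm)).1 hzv' ▸ hzw)
  · rintro (h | h)
    · exact ⟨w, hw, List.sublist_cons_self _ _, h⟩
    · exact ⟨v, hv, h, List.sublist_cons_self _ _⟩

lemma countWords_supersequences [Fintype α] (w : List α) :
    (countWords (w.length + 1) (w.Sublist ·) : ℤ)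
      = (w.length + 1) * (Fintype.card α - 1) + 1 := by
  classical
  induction w with
  | nil => simp [countWords_succ, countWords_zero_of_nil]
  | cons c w ih =>
    have hne : ∀ b ≠ c, countWords (w.length + 1) (fun l => (c :: w).Sublist (b :: l)) = 1 := by
      intro b hb
      refine (countWords_congr fun l hl => ?_).trans (countWords_eq_self (c :: w))
      rw [cons_sublist_cons_of_ne hb.symm, sublist_iff_eq_of_length_eq (w := c :: w) hl.symm,
        eq_comm]
    rw [List.length_cons, countWords_succ, Nat.cast_sum,
      sum_eq_of_forall_ne c c _ 1 0 fun b hb => by simp [hne b hb]]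
    simp only [List.cons_sublist_cons, ih]
    push_cast
    ring

lemma countWords_subsequences [Finite α] [DecidableEq α] (a : α) (w : List α) :
    countWords w.length (·.Sublist (a :: w)) = numRuns (a :: w) := by
  cases nonempty_fintype α
  induction w generalizing a with
  | nil => exact countWords_zero_of_nil (List.nil_sublist _)
  | cons c w ih =>
    have hne : ∀ b ≠ a, countWords w.length (fun l => (b :: l).Sublist (a :: c :: w))
        = if b = c then 1 else 0 := by
      intro b hb
      rw [← countWords_cons_eq_cons]
      refine countWords_congr fun l hl => ?_
      rw [cons_sublist_cons_of_ne hb, sublist_iff_eq_of_length_eq (by simp [hl])]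
    zify
    rw [List.length_cons, countWords_succ, Nat.cast_sum,
      sum_eq_of_forall_ne a c _ 0 1 fun b hb => by simp [hne b hb]]
    simp only [List.cons_sublist_cons, ih, numRuns_cons_cons]
    push_cast
    ring

lemma countWords_between_succ [Finite α] {a c : α} (hac : a ≠ c) (w : List α) :
    countWords (w.length + 1) (fun l => w.Sublist l ∧ l.Sublist (a :: c :: w))
      = countWords w.length (fun l => w.Sublist (a :: l) ∧ l.Sublist (c :: w)) + 1 := by
  classical
  cases nonempty_fintype α
  have hne : ∀ b ≠ a, countWords w.length (fun l => w.Sublist (b :: l) ∧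
      (b :: l).Sublist (a :: c :: w)) = if b = c then 1 else 0 := by
    intro b hb
    rw [← countWords_cons_eq_cons]
    refine countWords_congr fun l hl => ?_
    rw [cons_sublist_cons_of_ne hb,
      sublist_iff_eq_of_length_eq (l := c :: w) (by simp only [List.length_cons, hl])]
    refine and_iff_right_of_imp fun h => ?_
    rw [(List.cons.inj h).2]
    exact List.sublist_cons_self _ _
  zify
  rw [countWords_succ, Nat.cast_sum,
    sum_eq_of_forall_ne a c _ 0 1 fun b hb => by simp [hne b hb]]
  simp [hac]

lemma countWords_between [Finite α] [DecidableEq α] {a c : α} (hac : a ≠ c) (w : List α) :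
    countWords (w.length + 1) (fun l => w.Sublist l ∧ l.Sublist (a :: c :: w))
      = altMatch a c w + 2 := by
  induction w generalizing a c with
  | nil =>
    rw [countWords_between_succ hac, List.length_nil, countWords_zero_of_nil (by simp), altMatch]
  | cons d w ih =>
    rw [countWords_between_succ hac, altMatch]
    split_ifs with hda
    · subst hda
      simp only [List.cons_sublist_cons, List.length_cons, ih hac.symm]
    · have huniq : ∀ l : List α, l.length = (d :: w).length →
          ((d :: w).Sublist (a :: l) ∧ l.Sublist (c :: d :: w) ↔ l = d :: w) := by
        intro l hl
        rw [cons_sublist_cons_of_ne hda, sublist_iff_eq_of_length_eq hl.symm, eq_comm]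
        exact and_iff_left_of_imp fun h => h ▸ List.sublist_cons_self _ _
      rw [countWords_congr huniq, countWords_eq_self]

variable [Fintype α] [DecidableEq α]

lemma countWords_sublist_cons_or_sublist {a b : α} (hba : b ≠ a) (c : α) (w : List α) :
    (countWords (w.length + 1)
        (fun l => (c :: w).Sublist (b :: l) ∨ l.Sublist (a :: c :: w)) : ℤ)
      = numRuns (a :: c :: w)
        + if b = c then (w.length + 1 : ℤ) * (Fintype.card α - 1) - 1 - altMatch a c w else 0 := by
  have hsub := countWords_subsequences a (c :: w)
  rw [List.length_cons] at hsub
  split_ifs with hbc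
  · subst hbc
    have hincl := countWords_or_add_countWords_and (w.length + 1) (w.Sublist ·)
      (·.Sublist (a :: b :: w))
    rw [countWords_between hba.symm, hsub] at hincl
    zify at hincl
    rw [countWords_supersequences] at hincl
    simp only [List.cons_sublist_cons]
    linear_combination hincl
  · rw [add_zero, ← hsub, Nat.cast_inj]
    refine countWords_congr fun l hl => or_iff_right_of_imp fun h => ?_
    rw [cons_sublist_cons_of_ne (Ne.symm hbc),
      sublist_iff_eq_of_length_eq (w := c :: w) hl.symm] at h
    exact h ▸ List.sublist_cons_self _ _

lemma countWords_hasCommonSubseq_cons_cons (a c : α) (w : List α) :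
    (countWords (w.length + 2) (HasCommonSubseq (w.length + 1) (a :: c :: w)) : ℤ)
      = countWords (w.length + 1) (HasCommonSubseq w.length (c :: w))
        + (Fintype.card α - 1) * numRuns (a :: c :: w)
        + if a = c then 0 else (w.length + 1 : ℤ) * (Fintype.card α - 1) - 1 - altMatch a c w := by
  have hne : ∀ b ≠ a, (countWords (w.length + 1) (fun l =>
      HasCommonSubseq (w.length + 1) (a :: c :: w) (b :: l)) : ℤ) = numRuns (a :: c :: w)
        + if b = c then (w.length + 1 : ℤ) * (Fintype.card α - 1) - 1 - altMatch a c w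
          else 0 := by
    intro b hb
    rw [← countWords_sublist_cons_or_sublist hb, Nat.cast_inj]
    exact countWords_congr fun l hl => hasCommonSubseq_cons_cons_of_ne hb.symm rfl hl
  rw [countWords_succ, Nat.cast_sum, sum_eq_of_forall_ne a c _ _ _ hne]
  simp only [hasCommonSubseq_cons_cons]

theorem countWords_hasCommonSubseq (c : α) (w : List α) :
    (countWords (w.length + 1) (HasCommonSubseq w.length (c :: w)) : ℤ)
      = numRuns (c :: w) * ((Fintype.card α - 1) * (w.length + 1) - 1) + 2
        - altFactors (c :: w) := by
  induction w generalizing c with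
  | nil =>
    have hempty : ∀ l : List α, HasCommonSubseq 0 [c] l := fun l => ⟨[], rfl, by simp, by simp⟩
    simp only [List.length_nil, zero_add, countWords_succ, hempty, countWords_zero_of_nil,
      Finset.sum_const, Finset.card_univ, smul_eq_mul, mul_one, numRuns_singleton, Nat.cast_one,
      Nat.cast_zero, one_mul, altFactors_singleton, sub_zero]
    ring
  | cons d w ih =>
    rw [List.length_cons, countWords_hasCommonSubseq_cons_cons, ih, altFactors_cons_cons,
      numRuns_cons_cons]
    push_cast
    split_ifs <;> ring

end BallSize

section UniformMeasure

open MeasureTheory ProbabilityTheory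
open scoped NNReal

variable {Ω : Type*} [Fintype Ω] [MeasurableSpace Ω] [MeasurableSingletonClass Ω]

lemma uniformOn_univ_real (s : Set Ω) :
    (uniformOn Set.univ).real s = s.ncard / Fintype.card Ω := by
  rw [measureReal_def, uniformOn_univ, Measure.count_apply s.toFinite.measurableSet,
    ENNReal.toReal_div, ← s.toFinite.cast_ncard_eq]
  rfl

lemma integral_uniformOn_univ (f : Ω → ℝ) :
    ∫ ω, f ω ∂uniformOn Set.univ = (∑ ω, f ω) / Fintype.card Ω := by
  rw [integral_fintype .of_finite, Finset.sum_div]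
  simp only [uniformOn_univ_real, Set.ncard_singleton, Nat.cast_one, smul_eq_mul, mul_one,
    div_eq_inv_mul]

lemma hasSubgaussianMGF_uniformOn_univ_iff [Nonempty Ω] {X : Ω → ℝ} {c : ℝ≥0} :
    HasSubgaussianMGF X c (uniformOn Set.univ) ↔
      ∀ t : ℝ, ∑ ω, Real.exp (t * X ω) ≤ Fintype.card Ω * Real.exp (c * t ^ 2 / 2) := by
  have hmgf (t : ℝ) : mgf X (uniformOn Set.univ) t ≤ Real.exp (c * t ^ 2 / 2) ↔
      ∑ ω, Real.exp (t * X ω) ≤ Fintype.card Ω * Real.exp (c * t ^ 2 / 2) := by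
    rw [mgf, integral_uniformOn_univ, div_le_iff₀' (Nat.cast_pos.2 Fintype.card_pos)]
  simp only [← hmgf]
  exact ⟨fun h => h.mgf_le, fun h => ⟨fun _ => .of_finite, h⟩⟩

lemma hasSubgaussianMGF_uniformOn_univ_of_sum_eq_zero [Nonempty Ω] {X : Ω → ℝ} {D : ℝ≥0}
    (hsum : ∑ ω, X ω = 0) (hD : ∀ ω, |X ω| ≤ D) :
    HasSubgaussianMGF X (D ^ 2) (uniformOn Set.univ) := by
  have hoeffding := hasSubgaussianMGF_of_mem_Icc_of_integral_eq_zero (X := X)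
    (μ := uniformOn Set.univ) (measurable_of_finite X).aemeasurable
    (.of_forall fun ω => abs_le.1 (hD ω)) (by rw [integral_uniformOn_univ, hsum, zero_div])
  have hwidth : ‖(D : ℝ) - -D‖₊ / 2 = D := by
    ext
    simp [← two_mul]
  rwa [hwidth] at hoeffding

end UniformMeasure

section Azuma

open MeasureTheory ProbabilityTheory
open scoped NNReal

variable {α : Type*} [Nonempty α] [MeasurableSpace α] [MeasurableSingletonClass α]
  {F : List α → ℝ}

lemma hasSubgaussianMGF_ofFn_succ [Finite α] {k : ℕ} {c d : ℝ≥0}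
    (hF : HasSubgaussianMGF (fun x : Fin k → α => F (List.ofFn x) - F []) c (uniformOn Set.univ))
    (hstep : ∀ w : List α, w.length = k →
      HasSubgaussianMGF (fun a => F (a :: w) - F w) d (uniformOn Set.univ)) :
    HasSubgaussianMGF (fun x : Fin (k + 1) → α => F (List.ofFn x) - F []) (c + d)
      (uniformOn Set.univ) := by
  cases nonempty_fintype α
  simp only [hasSubgaussianMGF_uniformOn_univ_iff] at hF hstep ⊢
  intro t
  calc ∑ x : Fin (k + 1) → α, Real.exp (t * (F (List.ofFn x) - F []))
      = ∑ x : Fin k → α, (∑ a, Real.exp (t * (F (a :: List.ofFn x) - F (List.ofFn x))))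
          * Real.exp (t * (F (List.ofFn x) - F [])) := by
        rw [sum_ofFn_succ k fun w => Real.exp (t * (F w - F [])), Finset.sum_comm]
        simp only [Finset.sum_mul, ← Real.exp_add, ← mul_add, sub_add_sub_cancel]
    _ ≤ ∑ x : Fin k → α, (Fintype.card α * Real.exp (d * t ^ 2 / 2))
          * Real.exp (t * (F (List.ofFn x) - F [])) := by
        gcongr with x
        exact hstep _ List.length_ofFn t
    _ ≤ (Fintype.card α * Real.exp (d * t ^ 2 / 2))
          * (Fintype.card (Fin k → α) * Real.exp (c * t ^ 2 / 2)) := by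
        rw [← Finset.mul_sum]
        gcongr
        exact hF t
    _ = Fintype.card (Fin (k + 1) → α) * Real.exp ((c + d : ℝ≥0) * t ^ 2 / 2) := by
        rw [NNReal.coe_add, add_mul, add_div, Real.exp_add]
        simp only [Fintype.card_fun, Fintype.card_fin, Nat.cast_pow]
        ring

-- Azuma–Hoeffding for the martingale that reveals the letters of a word from last to first.
theorem hasSubgaussianMGF_ofFn [Fintype α] {n : ℕ} {D : ℕ → ℝ≥0}
    (hsum : ∀ w : List α, w.length < n → ∑ a, (F (a :: w) - F w) = 0)
    (hD : ∀ w : List α, w.length < n → ∀ a, |F (a :: w) - F w| ≤ D w.length) :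
    HasSubgaussianMGF (fun x : Fin n → α => F (List.ofFn x) - F []) (∑ k ∈ range n, D k ^ 2)
      (uniformOn Set.univ) := by
  induction n with
  | zero => simp
  | succ k ih =>
    rw [Finset.sum_range_succ]
    refine hasSubgaussianMGF_ofFn_succ
      (ih (fun w hw => hsum w (hw.trans k.lt_succ_self)) fun w hw => hD w (hw.trans k.lt_succ_self))
      fun w hw => hasSubgaussianMGF_uniformOn_univ_of_sum_eq_zero (hsum w ?_) (hw ▸ hD w ?_) <;>
    exact hw ▸ k.lt_succ_self

end Azuma

section Martingale

variable {α : Type*} [DecidableEq α] {q : ℝ}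

/-- The mean number `∑ q ^ (-i)`, `1 ≤ i ≤ r`, of consecutive steps by which `r` further uniformly
random letters from `q` continue an alternating word. -/
noncomputable def meanExtension (q : ℝ) (r : ℕ) : ℝ := (q ^ r - 1) / (q ^ r * (q - 1))

lemma meanExtension_zero (q : ℝ) : meanExtension q 0 = 0 := by simp [meanExtension]

lemma meanExtension_succ (hq : 1 < q) (r : ℕ) :
    meanExtension q (r + 1) = (1 + meanExtension q r) / q := by
  have hq' : q - 1 ≠ 0 := (sub_pos.2 hq).ne'
  have hq0 : q ≠ 0 := by positivity
  rw [meanExtension, meanExtension]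
  field_simp
  ring

lemma meanExtension_nonneg (hq : 1 < q) (r : ℕ) : 0 ≤ meanExtension q r := by
  induction r with
  | zero => exact (meanExtension_zero q).ge
  | succ r ih =>
    rw [meanExtension_succ hq]
    positivity

lemma meanExtension_le_one (hq : 2 ≤ q) (r : ℕ) : meanExtension q r ≤ 1 := by
  induction r with
  | zero => exact (meanExtension_zero q).trans_le zero_le_one
  | succ r ih =>
    rw [meanExtension_succ (by linarith), div_le_one (by linarith)]
    linarith

/-- The mean size of the radius one ball around a uniformly random word of length `n` over `q`
letters. -/
noncomputable def ballMean (q : ℝ) (n : ℕ) : ℝ :=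
  n ^ 2 * (q + 1 / q - 2) + 2 - n / q + meanExtension q (n - 1)

/-- The mean size of the radius one ball around a word of length `n` over `q` letters with the
given suffix and uniformly random remaining letters. -/
noncomputable def ballMartingale (q : ℝ) (n : ℕ) : List α → ℝ
  | [] => ballMean q n
  | c :: w =>
    (q * n - n - 1) * (numRuns (c :: w) + (n - (w.length + 1)) * (1 - 1 / q)) + 2
      - (altFactors (c :: w) + (n - (w.length + 1)) / q
        + (altTail (c :: w) - 1) * meanExtension q (n - (w.length + 1)))

lemma ballMartingale_singleton (hq : q ≠ 0) (n : ℕ) (a : α) :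
    ballMartingale q n [a] = ballMean q n := by
  simp only [ballMartingale, ballMean, numRuns_singleton, altFactors_singleton, altTail,
    meanExtension, List.length_nil, zero_add, Nat.cast_zero, Nat.cast_one]
  field_simp
  ring

lemma ballMartingale_cons_cons_sub (hq : 1 < q) {n : ℕ} {w : List α} (hn : w.length + 1 < n)
    (a c : α) :
    ballMartingale q n (a :: c :: w) - ballMartingale q n (c :: w)
      = (q * n - n - 1 - meanExtension q (n - (w.length + 2))
          + altTail (c :: w) * (1 + meanExtension q (n - (w.length + 2)))) / q
        - if a = c then q * n - n - 1 - meanExtension q (n - (w.length + 2))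
          else altMatch a c w * (1 + meanExtension q (n - (w.length + 2))) := by
  have hq0 : q ≠ 0 := by positivity
  have hr : n - (w.length + 1) = n - (w.length + 2) + 1 := by omega
  simp only [ballMartingale, List.length_cons, numRuns_cons_cons, altFactors_cons_cons, hr,
    meanExtension_succ hq, altTail_cons_cons, add_assoc, one_add_one_eq_two]
  rcases eq_or_ne a c with h | h
  · simp only [h, if_true]
    push_cast
    field_simp
    ring
  · simp only [h, if_false]
    push_cast
    field_simp
    ring

lemma sum_ballMartingale_cons_sub [Fintype α] [Nontrivial α] {n : ℕ} {w : List α}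
    (hw : w.length < n) :
    ∑ a, (ballMartingale (Fintype.card α) n (a :: w) - ballMartingale (Fintype.card α) n w)
      = 0 := by
  have hq : (1 : ℝ) < Fintype.card α := Nat.one_lt_cast.2 Fintype.one_lt_card
  cases w with
  | nil =>
    refine Finset.sum_eq_zero fun a _ => sub_eq_zero.2 ?_
    exact ballMartingale_singleton (by positivity) n a
  | cons c w =>
    set b := meanExtension (Fintype.card α) (n - (w.length + 2))
    have hmatch : ∑ a ∈ univ.erase c, (altMatch a c w : ℝ) = altTail (c :: w) := by
      exact_mod_cast sum_altMatch_erase c w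
    have hterm : ∀ v : ℝ, ∑ a, (if a = c then v else altMatch a c w * (1 + b))
        = v + altTail (c :: w) * (1 + b) := by
      intro v
      rw [← Finset.add_sum_erase _ _ (mem_univ c), if_pos rfl, ← hmatch, Finset.sum_mul]
      exact congrArg _ (Finset.sum_congr rfl fun a ha => if_neg (Finset.ne_of_mem_erase ha))
    simp only [ballMartingale_cons_cons_sub hq hw]
    rw [Finset.sum_sub_distrib, hterm, Finset.sum_const, Finset.card_univ, nsmul_eq_mul,
      mul_div_cancel₀ _ (by positivity), sub_self]

lemma abs_ballMartingale_cons_cons_sub_le (hq : 2 ≤ q) {n : ℕ} {w : List α}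
    (hn : w.length + 1 < n) (a c : α) :
    |ballMartingale q n (a :: c :: w) - ballMartingale q n (c :: w)| ≤ (q + 1 / q) * n := by
  rw [ballMartingale_cons_cons_sub (by linarith) hn]
  set b := meanExtension q (n - (w.length + 2))
  have hb0 : 0 ≤ b := meanExtension_nonneg (by linarith) _
  have hb1 : b ≤ 1 := meanExtension_le_one hq _
  have hn2 : (2 : ℝ) ≤ n := by exact_mod_cast (Nat.le_add_left 2 w.length).trans hn
  have htail : (altTail (c :: w) : ℝ) ≤ n := by
    exact_mod_cast (altTail_cons_le_length c w).trans (by omega)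
  have hrun0 : 0 ≤ q * n - n - 1 - b := by nlinarith
  have hfactor : ∀ k : ℕ, k ≤ altTail (c :: w) →
      0 ≤ k * (1 + b) ∧ k * (1 + b) ≤ n * 2 := by
    intro k hk
    have hk' : (k : ℝ) ≤ n := (Nat.cast_le.2 hk).trans htail
    exact ⟨by positivity, mul_le_mul hk' (by linarith) (by positivity) (by positivity)⟩
  have hD : q * n ≤ (q + 1 / q) * n := by
    gcongr
    exact le_add_of_nonneg_right (by positivity)
  refine abs_sub_le_of_nonneg_of_le ?_ ?_ ?_ ?_
  · have := (hfactor _ le_rfl).1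
    positivity
  · refine le_trans ?_ hD
    rw [div_le_iff₀ (by positivity)]
    nlinarith [(hfactor _ le_rfl).2]
  · split_ifs with hac
    exacts [hrun0, (hfactor _ (altMatch_le_altTail hac w)).1]
  · refine le_trans ?_ hD
    split_ifs with hac
    · linarith
    · nlinarith [(hfactor _ (altMatch_le_altTail hac w)).2]

end Martingale

section BallConcentration

open MeasureTheory ProbabilityTheory
open scoped NNReal

variable {α : Type*} [Fintype α]

lemma countWords_hasCommonSubseq_ofFn [DecidableEq α] {k : ℕ} (x : Fin (k + 1) → α) :
    (countWords (k + 1) (HasCommonSubseq k (List.ofFn x)) : ℝ)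
      = ballMartingale (Fintype.card α) (k + 1) (List.ofFn x) := by
  have hcount := congrArg (Int.cast : ℤ → ℝ)
    (countWords_hasCommonSubseq (x 0) (List.ofFn fun i => x i.succ))
  rw [List.ofFn_succ, ballMartingale, List.length_ofFn, ← Nat.cast_succ, Nat.sub_self,
    meanExtension_zero]
  rw [List.length_ofFn] at hcount
  push_cast at hcount ⊢
  linear_combination hcount

theorem hasSubgaussianMGF_countWords_hasCommonSubseq [Nontrivial α] [MeasurableSpace α]
    [MeasurableSingletonClass α] {n : ℕ} (hn : n ≠ 0) :
    HasSubgaussianMGF (fun x : Fin n → α =>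
        (countWords n (HasCommonSubseq (n - 1) (List.ofFn x)) : ℝ) - ballMean (Fintype.card α) n)
      ((n - 1 : ℕ) * ((Fintype.card α + 1 / Fintype.card α) * n) ^ 2) (uniformOn Set.univ) := by
  classical
  obtain ⟨k, rfl⟩ := Nat.exists_eq_succ_of_ne_zero hn
  have hq : (2 : ℝ) ≤ Fintype.card α := by exact_mod_cast Fintype.one_lt_card (α := α)
  -- The first revealed letter carries no information about the ball size, hence `k` steps only.
  let D : ℕ → ℝ≥0
    | 0 => 0
    | _ + 1 => (Fintype.card α + 1 / Fintype.card α) * (k + 1 : ℕ)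
  have hD : ∀ w : List α, w.length < k + 1 → ∀ a, |ballMartingale (Fintype.card α) (k + 1) (a :: w)
      - ballMartingale (Fintype.card α) (k + 1) w| ≤ D w.length := by
    rintro (_ | ⟨c, w⟩) hw a
    · rw [ballMartingale_singleton (by positivity), ballMartingale, sub_self, abs_zero]
      exact (D 0).2
    · exact_mod_cast abs_ballMartingale_cons_cons_sub_le hq hw a c
  have hvar : ∑ i ∈ range (k + 1), D i ^ 2
      = k * ((Fintype.card α + 1 / Fintype.card α) * (k + 1 : ℕ)) ^ 2 := by
    simp [Finset.sum_range_succ', D]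
  have azuma := hasSubgaussianMGF_ofFn (fun w hw => sum_ballMartingale_cons_sub hw) hD
  rw [hvar] at azuma
  simp only [← countWords_hasCommonSubseq_ofFn] at azuma
  exact azuma

lemma L1size_eq_countWords {m : ℕ} (n : ℕ) (x : Fin n → Fin m) :
    L1size n x = countWords n (HasCommonSubseq (n - 1) (List.ofFn x)) := rfl

end BallConcentration

end FLL

theorem stmt13_general (n m : ℕ) (hn : 1 < n) (hm : 1 < m) (c : ℝ) (hc : 0 ≤ c) :
    (Set.ncard {x : Fin n → Fin m |
        (L1size n x : ℝ)
            - ((n : ℝ) ^ 2 * ((m : ℝ) + 1 / m - 2) + 2 - (n : ℝ) / m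
                + ((m : ℝ) ^ (n - 1) - 1) / ((m : ℝ) ^ (n - 1) * ((m : ℝ) - 1)))
          ≥ c * ((m : ℝ) + 1 / m) * n * Real.sqrt ((n : ℝ) - 1)} : ℝ) / (m : ℝ) ^ n
      ≤ Real.exp (-c ^ 2 / 2)
    ∧ (Set.ncard {x : Fin n → Fin m |
        (L1size n x : ℝ)
            - ((n : ℝ) ^ 2 * ((m : ℝ) + 1 / m - 2) + 2 - (n : ℝ) / m
                + ((m : ℝ) ^ (n - 1) - 1) / ((m : ℝ) ^ (n - 1) * ((m : ℝ) - 1)))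
          ≤ -(c * ((m : ℝ) + 1 / m) * n * Real.sqrt ((n : ℝ) - 1))} : ℝ) / (m : ℝ) ^ n
      ≤ Real.exp (-c ^ 2 / 2) := by
  have : Nontrivial (Fin m) := Fin.nontrivial_iff_two_le.2 hm
  have hn1 : (0 : ℝ) < n - 1 := sub_pos.2 (Nat.one_lt_cast.2 hn)
  have subG := FLL.hasSubgaussianMGF_countWords_hasCommonSubseq (α := Fin m) (n := n) (by omega)
  set ε := c * ((m : ℝ) + 1 / m) * n * Real.sqrt ((n : ℝ) - 1) with hε
  have hε0 : 0 ≤ ε := by positivity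
  have upper := subG.measure_ge_le hε0
  have lower := subG.neg.measure_ge_le hε0
  have hexponent : -ε ^ 2 / (2 * ((n - 1 : ℕ) * ((m + 1 / m) * n) ^ 2)) = -c ^ 2 / 2 := by
    rw [hε, mul_pow, Real.sq_sqrt hn1.le, Nat.cast_pred (by omega)]
    field_simp
  simp only [FLL.uniformOn_univ_real, Fintype.card_fun, Fintype.card_fin, Nat.cast_pow,
    NNReal.coe_mul, NNReal.coe_pow, NNReal.coe_add, NNReal.coe_div, NNReal.coe_one,
    NNReal.coe_natCast, hexponent, Pi.neg_apply, le_neg (a := ε), ← FLL.L1size_eq_countWords]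
    at upper lower
  exact ⟨upper, lower⟩

/-- Concentration of `|L_1(x)|` for uniformly random `x ∈ Z_m^n`, `m > 2`, `n > 3`: both
`Pr(|L_1(x)| - E[|L_1(x)|] ≥ c(m + 1/m)n√(n-1))` and
`Pr(|L_1(x)| - E[|L_1(x)|] ≤ -c(m + 1/m)n√(n-1))` are at most `exp(-c²/2)`, where
`E[|L_1(x)|] = n²(m + 1/m - 2) + 2 - n/m + (m^(n-1)-1)/(m^(n-1)(m-1))`. -/
theorem stmt13 (n m : ℕ) (hn : 3 < n) (hm : 2 < m) (c : ℝ) (hc : 0 < c) :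
    (Set.ncard {x : Fin n → Fin m |
        (L1size n x : ℝ)
            - ((n : ℝ) ^ 2 * ((m : ℝ) + 1 / m - 2) + 2 - (n : ℝ) / m
                + ((m : ℝ) ^ (n - 1) - 1) / ((m : ℝ) ^ (n - 1) * ((m : ℝ) - 1)))
          ≥ c * ((m : ℝ) + 1 / m) * n * Real.sqrt ((n : ℝ) - 1)} : ℝ) / (m : ℝ) ^ n
      ≤ Real.exp (-c ^ 2 / 2)
    ∧ (Set.ncard {x : Fin n → Fin m |
        (L1size n x : ℝ)
            - ((n : ℝ) ^ 2 * ((m : ℝ) + 1 / m - 2) + 2 - (n : ℝ) / m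
                + ((m : ℝ) ^ (n - 1) - 1) / ((m : ℝ) ^ (n - 1) * ((m : ℝ) - 1)))
          ≤ -(c * ((m : ℝ) + 1 / m) * n * Real.sqrt ((n : ℝ) - 1))} : ℝ) / (m : ℝ) ^ n
      ≤ Real.exp (-c ^ 2 / 2) :=
  stmt13_general n m (by omega) (by omega) c hc.le
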